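/- For every integer d ≥ 1 and every m ∈ {-1, -2, -3}, the element (σ1σ2)^{3d} σ1^m σ2^{-1} of the braid group B_3 is quasipositive; that is, it can be written as a finite product of conjugates of the generators σ1 and σ2. -/

import Mathlib

/-- The single braid relator σ₁σ₂σ₁(σ₂σ₁σ₂)⁻¹ in the free group on two generators. -/
def braidRels : Set (FreeGroup (Fin 2)) :=
  {FreeGroup.of 0 * FreeGroup.of 1 * FreeGroup.of 0 *
    (FreeGroup.of 1 * FreeGroup.of 0 * FreeGroup.of 1)⁻¹}

/-- The braid group B₃ = ⟨σ₁, σ₂ ∣ σ₁σ₂σ₁ = σ₂σ₁σ₂⟩. -/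
abbrev B3 : Type := PresentedGroup braidRels

/-- The generator σ₁ of B₃. -/
def σ₁ : B3 := PresentedGroup.of 0

/-- The generator σ₂ of B₃. -/
def σ₂ : B3 := PresentedGroup.of 1

/-- A 3-braid is quasipositive if it is a finite product of conjugates of the
generators σ₁ and σ₂. -/
def Quasipositive (β : B3) : Prop :=
  ∃ (k : ℕ) (w g : Fin k → B3),
    (∀ i, g i = σ₁ ∨ g i = σ₂) ∧
    β = (List.ofFn fun i => w i * g i * (w i)⁻¹).prod

/-!
The full twist `(σ₁σ₂)³` commutes with `σ₁`, and the braid relation gives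
`(σ₁σ₂)³ σ₁⁻⁴ = c σ₂` with `c = (σ₁⁻¹σ₂) σ₁ (σ₁⁻¹σ₂)⁻¹`. Taking `d`-th powers,
`(σ₁σ₂)³ᵈ σ₁ᵐ σ₂⁻¹ = (c σ₂)ᵈ σ₁ᵐ⁺⁴ᵈ σ₂⁻¹ = (c σ₂)ᵈ⁻¹ c (σ₂σ₁σ₂⁻¹)ᵐ⁺⁴ᵈ`,
a product of conjugates of the generators as soon as `1 ≤ d` and `-4d ≤ m`.
-/

section BraidRelation

variable {G : Type*} [Group G] {a b : G}

/-- The submonoid generated by the conjugates of `a` and `b`; in `B3`, with `a` and `b` the standard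
generators, it is the monoid of quasipositive braids. -/
def conjMonoid (a b : G) : Submonoid G :=
  Submonoid.closure (Group.conjugatesOfSet {a, b})

theorem conj_left_mem_conjMonoid (w : G) : w * a * w⁻¹ ∈ conjMonoid a b :=
  Submonoid.subset_closure <|
    Group.mem_conjugatesOfSet_iff.2 ⟨a, .inl rfl, isConj_iff.2 ⟨w, rfl⟩⟩

theorem right_mem_conjMonoid : b ∈ conjMonoid a b :=
  Submonoid.subset_closure (Group.subset_conjugatesOfSet (.inr rfl))

theorem mul_pow_three_eq_of_braid (h : a * b * a = b * a * b) :
    (a * b) ^ 3 = (a * b * a) * (a * b * a) := by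
  calc (a * b) ^ 3 = (a * b * a) * (b * a * b) := by
        simp only [pow_succ, pow_zero, one_mul, mul_assoc]
    _ = (a * b * a) * (a * b * a) := by rw [h]

theorem commute_mul_pow_three_of_braid (h : a * b * a = b * a * b) : Commute ((a * b) ^ 3) a := by
  have hab : SemiconjBy (a * b * a) b a := by
    calc a * b * a * b = a * (b * a * b) := by simp only [mul_assoc]
      _ = a * (a * b * a) := by rw [h]
  have hba : SemiconjBy (a * b * a) a b := by
    calc a * b * a * a = b * a * b * a := by rw [h]
      _ = b * (a * b * a) := by simp only [mul_assoc]
  rw [mul_pow_three_eq_of_braid h]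
  exact hab.mul_left hba

theorem mul_pow_three_mul_zpow_neg_four_of_braid (h : a * b * a = b * a * b) :
    (a * b) ^ 3 * a ^ (-4 : ℤ) = (a⁻¹ * b) * a * (a⁻¹ * b)⁻¹ * b := by
  have hconj : b⁻¹ * a * b = a * b * a⁻¹ := by
    rw [eq_mul_inv_iff_mul_eq, mul_assoc, mul_assoc, inv_mul_eq_iff_eq_mul]
    simpa only [mul_assoc] using h
  have hmul : a * (a * b) ^ 3 = b * a * (a * b * a⁻¹) * a ^ 4 := by
    calc a * (a * b) ^ 3 = (a * b) ^ 3 * a := (commute_mul_pow_three_of_braid h).eq.symm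
      _ = (b * a * b) * (a * b * a) * a := by rw [mul_pow_three_eq_of_braid h, h]
      _ = b * a * (b * a * b) * a * a := by simp only [mul_assoc]
      _ = b * a * (a * b * a) * a * a := by rw [h]
      _ = b * a * (a * b * a⁻¹) * a ^ 4 := by
        simp only [pow_succ, pow_zero, one_mul, mul_assoc, inv_mul_cancel_left]
  calc (a * b) ^ 3 * a ^ (-4 : ℤ) = a⁻¹ * (a * (a * b) ^ 3) * a ^ (-4 : ℤ) := by
        rw [inv_mul_cancel_left]
    _ = a⁻¹ * (b * a * (b⁻¹ * a * b)) := by rw [hmul, hconj]; group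
    _ = (a⁻¹ * b) * a * (a⁻¹ * b)⁻¹ * b := by group

theorem mul_zpow_mul_zpow_mul_inv_eq_of_braid (h : a * b * a = b * a * b) (d m : ℤ) :
    (a * b) ^ (3 * d) * a ^ m * b⁻¹ =
      ((a⁻¹ * b) * a * (a⁻¹ * b)⁻¹ * b) ^ (d - 1) * ((a⁻¹ * b) * a * (a⁻¹ * b)⁻¹) *
        (b * a * b⁻¹) ^ (m + 4 * d) := by
  have htwist : (a * b) ^ (3 * d) * a ^ (-4 * d) = ((a⁻¹ * b) * a * (a⁻¹ * b)⁻¹ * b) ^ d := by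
    rw [← mul_pow_three_mul_zpow_neg_four_of_braid h,
      ((commute_mul_pow_three_of_braid h).zpow_right _).mul_zpow, zpow_mul, zpow_mul, zpow_ofNat]
  calc (a * b) ^ (3 * d) * a ^ m * b⁻¹
      = (a * b) ^ (3 * d) * a ^ (-4 * d) * a ^ (m + 4 * d) * b⁻¹ := by
        rw [mul_assoc _ (a ^ (-4 * d)), ← zpow_add, show -4 * d + (m + 4 * d) = m by ring]
    _ = _ := by
        rw [htwist, conj_zpow, zpow_sub_one]
        group

theorem mul_zpow_mul_zpow_mul_inv_mem_conjMonoid (h : a * b * a = b * a * b) {d m : ℤ}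
    (hd : 1 ≤ d) (hm : -4 * d ≤ m) :
    (a * b) ^ (3 * d) * a ^ m * b⁻¹ ∈ conjMonoid a b := by
  obtain ⟨n, hn⟩ := Int.eq_ofNat_of_zero_le (sub_nonneg.2 hd)
  obtain ⟨k, hk⟩ := Int.eq_ofNat_of_zero_le (show 0 ≤ m + 4 * d by lia)
  have hconj := conj_left_mem_conjMonoid (a := a) (b := b)
  rw [mul_zpow_mul_zpow_mul_inv_eq_of_braid h, hn, hk, zpow_natCast, zpow_natCast]
  exact mul_mem (mul_mem (pow_mem (mul_mem (hconj _) right_mem_conjMonoid) n) (hconj _))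
    (pow_mem (hconj b) k)

end BraidRelation

theorem quasipositive_iff_mem_conjMonoid {β : B3} : Quasipositive β ↔ β ∈ conjMonoid σ₁ σ₂ := by
  constructor
  · rintro ⟨k, w, g, hg, rfl⟩
    refine list_prod_mem (List.forall_mem_ofFn_iff.2 fun i => Submonoid.subset_closure ?_)
    exact Group.mem_conjugatesOfSet_iff.2 ⟨g i, hg i, isConj_iff.2 ⟨w i, rfl⟩⟩
  · intro hβ
    obtain ⟨l, hl, rfl⟩ := Submonoid.exists_list_of_mem_closure hβ
    have hfactor (i : Fin l.length) : ∃ w g, (g = σ₁ ∨ g = σ₂) ∧ w * g * w⁻¹ = l.get i := by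
      obtain ⟨g, hg, hconj⟩ := Group.mem_conjugatesOfSet_iff.1 (hl _ (l.get_mem i))
      obtain ⟨w, hw⟩ := isConj_iff.1 hconj
      exact ⟨w, g, hg, hw⟩
    choose w g hg hw using hfactor
    exact ⟨l.length, w, g, hg, by simp only [hw, List.ofFn_get]⟩

theorem σ₁_mul_σ₂_mul_σ₁ : σ₁ * σ₂ * σ₁ = σ₂ * σ₁ * σ₂ :=
  mul_inv_eq_one.1 (PresentedGroup.one_of_mem (Set.mem_singleton _))

theorem quasipositive_family_three_general {d m : ℤ} (hd : 1 ≤ d) (hm : -4 * d ≤ m) :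
    Quasipositive ((σ₁ * σ₂) ^ (3 * d) * σ₁ ^ m * σ₂⁻¹) :=
  quasipositive_iff_mem_conjMonoid.2
    (mul_zpow_mul_zpow_mul_inv_mem_conjMonoid σ₁_mul_σ₂_mul_σ₁ hd hm)

/-- For every d ≥ 1 and m ∈ {-1, -2, -3}, the 3-braid (σ₁σ₂)^{3d} σ₁^m σ₂⁻¹ is
quasipositive. -/
theorem quasipositive_family_three (d : ℤ) (hd : 1 ≤ d) (m : ℤ)
    (hm : m ∈ ({-1, -2, -3} : Set ℤ)) :
    Quasipositive ((σ₁ * σ₂) ^ (3 * d) * σ₁ ^ m * σ₂⁻¹) := by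
  refine quasipositive_family_three_general hd ?_
  rcases hm with rfl | rfl | rfl <;> lia
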